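/- arXiv:2109.02756 — 2 statements merged into one kernel-verified Lean document; each statement's English description precedes it below -/
import Mathlib

section
/- Let P ∈ ℝ^{n×n} be symmetric positive semidefinite, q ∈ ℝⁿ, H ∈ ℝ^{m×n}, g ∈ ℝᵐ, D ⊆ ℝⁿ nonempty closed convex, K ⊆ ℝᵐ a nonempty closed convex cone with polar cone K°. Suppose the step size α satisfies 0 < α ≤ (8 − 4/γ)/(√(λ² + 16ν²) + λ) for some γ ∈ (1/2, 1), λ ≥ ‖P‖, ν ≥ ‖H‖. For j = 1, 2, let z_j ∈ D, v_j ∈ ℝᵐ, and define w_j⁺ = π_{K°}[v_j + α(H z_j − g)], z_j⁺ = π_D[z_j − α(P z_j + q + Hᵀ w_j⁺)], v_j⁺ = w_j⁺ + α H (z_j⁺ − z_j). Then ‖z₂⁺ − z₁⁺‖² + ((1−γ)/γ)‖z₁ − z₁⁺ − z₂ + z₂⁺‖² + ‖v₂⁺ − v₁⁺‖² + ((1−γ)/γ)‖v₁ − v₁⁺ − v₂ + v₂⁺‖² ≤ ‖z₂ − z₁‖² + ‖v₂ − v₁‖². In other words, the PIPG update map (z,v) ↦ (z⁺, v⁺)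 is a γ-averaged operator on ℝⁿ × ℝᵐ. -/
open scoped RealInnerProductSpace
open Filter Topology Metric ContinuousLinearMap

/-- Projection onto a set: the unique nearest point, when it exists
(it exists and is unique for nonempty closed convex sets in Euclidean space). -/
noncomputable def proj {E : Type*} [NormedAddCommGroup E] [InnerProductSpace ℝ E]
    (S : Set E) (x : E) : E :=
  open Classical in
  if h : ∃ y, y ∈ S ∧ ∀ z ∈ S, ‖x - y‖ ≤ ‖x - z‖ then h.choose else 0

/-- The polar cone `K° = {w | ⟪w, y⟫ ≤ 0 for all y ∈ K}`. -/
def polarCone {E : Type*} [NormedAddCommGroup E] [InnerProductSpace ℝ E]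
    (K : Set E) : Set E := {w | ∀ y ∈ K, ⟪w, y⟫ ≤ 0}

/-- The recession cone `rec D = {y | y + z ∈ D for all z ∈ D}`. -/
def recCone {E : Type*} [NormedAddCommGroup E] (D : Set E) : Set E :=
  {y | ∀ z ∈ D, y + z ∈ D}

/-- The normal cone of `D` at `z`: `N_D(z) = {y | ⟪y, z' - z⟫ ≤ 0 for all z' ∈ D}`. -/
def normalCone {E : Type*} [NormedAddCommGroup E] [InnerProductSpace ℝ E]
    (D : Set E) (z : E) : Set E := {y | ∀ z' ∈ D, ⟪y, z' - z⟫ ≤ 0}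

/-!
Both projections are firmly nonexpansive, so the differences `z, z', v, v', w` of two runs of the
iteration satisfy two inner-product inequalities. In their sum the terms coupling `z'` and `w`
cancel, and the correction `v' = w + α H (z' - z)` leaves only
`α (⟪P d, d⟫ / 2 + 2 ⟪H d, e⟫)` with `d = z - z'` and `e = v - v'`; positivity of `P` enters through
`4 ⟪P z, z'⟫ = ⟪P (z + z'), z + z'⟫ - ⟪P d, d⟫ ≥ -⟪P d, d⟫`. That remainder is at most
`α / 2` times the quadratic form of the matrix with rows `(λ, 2ν)` and `(2ν, 0)` at `(‖d‖, ‖e‖)`,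
and the step size bound says that `α / 2` times the largest eigenvalue of this matrix is at most
`2 - 1 / γ = 1 - (1 - γ) / γ`.
-/

section Projection

variable {E : Type*} [NormedAddCommGroup E] [InnerProductSpace ℝ E] {S : Set E}

theorem exists_mem_forall_norm_sub_le (hne : S.Nonempty) (hS : IsComplete S) (hconv : Convex ℝ S)
    (x : E) : ∃ y, y ∈ S ∧ ∀ z ∈ S, ‖x - y‖ ≤ ‖x - z‖ := by
  obtain ⟨y, hy, hmin⟩ := exists_norm_eq_iInf_of_complete_convex hne hS hconv x
  have hbdd : BddBelow (Set.range fun z : S ↦ ‖x - z‖) :=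
    ⟨0, Set.forall_mem_range.2 fun _ ↦ norm_nonneg _⟩
  exact ⟨y, hy, fun z hz ↦ hmin.trans_le (ciInf_le hbdd ⟨z, hz⟩)⟩

theorem proj_mem_and_forall_norm_sub_proj_le (hne : S.Nonempty) (hS : IsComplete S)
    (hconv : Convex ℝ S) (x : E) :
    proj S x ∈ S ∧ ∀ z ∈ S, ‖x - proj S x‖ ≤ ‖x - z‖ := by
  have hex := exists_mem_forall_norm_sub_le hne hS hconv x
  rw [_root_.proj, dif_pos hex]
  exact hex.choose_spec

theorem proj_mem (hne : S.Nonempty) (hS : IsComplete S) (hconv : Convex ℝ S) (x : E) :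
    proj S x ∈ S :=
  (proj_mem_and_forall_norm_sub_proj_le hne hS hconv x).1

theorem inner_sub_proj_sub_proj_nonpos (hne : S.Nonempty) (hS : IsComplete S)
    (hconv : Convex ℝ S) (x : E) {z : E} (hz : z ∈ S) :
    ⟪x - proj S x, z - proj S x⟫ ≤ 0 := by
  obtain ⟨hmem, hmin⟩ := proj_mem_and_forall_norm_sub_proj_le hne hS hconv x
  have : Nonempty S := hne.to_subtype
  have hinf : ‖x - proj S x‖ = ⨅ z : S, ‖x - z‖ :=
    le_antisymm (le_ciInf fun z ↦ hmin z z.2)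
      (ciInf_le ⟨0, Set.forall_mem_range.2 fun _ ↦ norm_nonneg _⟩ (⟨_, hmem⟩ : S))
  exact (norm_eq_iInf_iff_real_inner_le_zero hconv hmem).1 hinf z hz

theorem inner_sub_sub_proj_sub_proj_nonneg (hne : S.Nonempty) (hS : IsComplete S)
    (hconv : Convex ℝ S) (x y : E) :
    0 ≤ ⟪x - y - (proj S x - proj S y), proj S x - proj S y⟫ := by
  have hx := inner_sub_proj_sub_proj_nonpos hne hS hconv x (proj_mem hne hS hconv y)
  have hy := inner_sub_proj_sub_proj_nonpos hne hS hconv y (proj_mem hne hS hconv x)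
  simp only [inner_sub_left, inner_sub_right] at hx hy ⊢
  linarith

end Projection

section PolarCone

variable {E : Type*} [NormedAddCommGroup E] [InnerProductSpace ℝ E]

theorem polarCone_nonempty (K : Set E) : (polarCone K).Nonempty :=
  ⟨0, fun y _ ↦ (inner_zero_left y).le⟩

theorem polarCone_eq_biInter (K : Set E) : polarCone K = ⋂ y ∈ K, {w | ⟪w, y⟫ ≤ 0} := by
  ext w
  simp [polarCone]

theorem isClosed_polarCone (K : Set E) : IsClosed (polarCone K) := by
  rw [polarCone_eq_biInter]
  exact isClosed_biInter fun y _ ↦ isClosed_le (by fun_prop) continuous_const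

theorem convex_polarCone (K : Set E) : Convex ℝ (polarCone K) := by
  rw [polarCone_eq_biInter]
  exact convex_iInter₂ fun y _ ↦ convex_halfSpace_le ((innerₗ E).flip y).isLinear 0

end PolarCone

theorem mul_le_of_le_div_of_pos {𝕜 : Type*} [Field 𝕜] [LinearOrder 𝕜] [IsStrictOrderedRing 𝕜]
    {a b c : 𝕜} (ha : 0 < a) (hc : 0 ≤ c) (h : a ≤ b / c) : a * c ≤ b := by
  have hc0 : c ≠ 0 := by
    rintro rfl
    exact ha.not_ge (h.trans_eq (div_zero b))
  exact (le_div_iff₀ (hc.lt_of_ne' hc0)).1 h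

-- `(p + √(p ^ 2 + 4 * q ^ 2)) / 2` is the largest eigenvalue of the matrix `!![p, q; q, 0]`.
theorem mul_sq_add_two_mul_mul_le (p q a b : ℝ) :
    p * a ^ 2 + 2 * q * (a * b) ≤ (√(p ^ 2 + 4 * q ^ 2) + p) / 2 * (a ^ 2 + b ^ 2) := by
  have hCauchy : p * (a ^ 2 - b ^ 2) + 4 * q * (a * b) ≤
      √(p ^ 2 + 4 * q ^ 2) * (a ^ 2 + b ^ 2) := by
    rw [← Real.sqrt_sq (by positivity : 0 ≤ a ^ 2 + b ^ 2), ← Real.sqrt_mul (by positivity)]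
    apply Real.le_sqrt_of_sq_le
    linarith [sq_nonneg (2 * p * (a * b) - 2 * q * (a ^ 2 - b ^ 2))]
  linarith

section Estimates

variable {E F : Type*} [NormedAddCommGroup E] [InnerProductSpace ℝ E]
  [NormedAddCommGroup F] [InnerProductSpace ℝ F]

theorem norm_sq_add_norm_sub_sq (x y : E) :
    ‖y‖ ^ 2 + ‖x - y‖ ^ 2 = ‖x‖ ^ 2 - 2 * ⟪x - y, y⟫ := by
  rw [norm_sub_sq_real, inner_sub_left, real_inner_self_eq_norm_sq]
  ring

theorem inner_map_le_of_opNorm_le (T : E →L[ℝ] F) {c : ℝ} (hT : ‖T‖ ≤ c) (x : E) (y : F) :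
    ⟪T x, y⟫ ≤ c * ‖x‖ * ‖y‖ :=
  (real_inner_le_norm _ _).trans
    (mul_le_mul_of_nonneg_right (T.le_of_opNorm_le hT x) (norm_nonneg y))

theorem neg_inner_map_sub_self_le_four_mul_inner {T : E →ₗ[ℝ] E} (hT : T.IsPositive) (x y : E) :
    -⟪T (x - y), x - y⟫ ≤ 4 * ⟪T x, y⟫ := by
  have hadd : 0 ≤ ⟪T (x + y), x + y⟫ := hT.re_inner_nonneg_left (x + y)
  have hsymm : ⟪T y, x⟫ = ⟪T x, y⟫ := by rw [hT.isSymmetric y x, real_inner_comm]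
  simp only [map_add, map_sub, inner_add_left, inner_add_right, inner_sub_left,
    inner_sub_right] at hadd ⊢
  linarith

theorem half_inner_add_two_mul_inner_le (P : E →L[ℝ] E) (H : E →L[ℝ] F) {lam ν : ℝ}
    (hlam : ‖P‖ ≤ lam) (hν : ‖H‖ ≤ ν) (x : E) (y : F) :
    ⟪P x, x⟫ / 2 + 2 * ⟪H x, y⟫ ≤
      (√(lam ^ 2 + 16 * ν ^ 2) + lam) / 4 * (‖x‖ ^ 2 + ‖y‖ ^ 2) := by
  have hPx := inner_map_le_of_opNorm_le P hlam x x
  have hHx := inner_map_le_of_opNorm_le H hν x y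
  have hquad := mul_sq_add_two_mul_mul_le lam (2 * ν) ‖x‖ ‖y‖
  rw [show lam ^ 2 + 4 * (2 * ν) ^ 2 = lam ^ 2 + 16 * ν ^ 2 by ring] at hquad
  linarith

theorem mul_half_inner_add_two_mul_inner_le (P : E →L[ℝ] E) (H : E →L[ℝ] F) {γ lam ν α : ℝ}
    (hγ : γ ≠ 0) (hlam : ‖P‖ ≤ lam) (hν : ‖H‖ ≤ ν) (hα0 : 0 < α)
    (hα : α ≤ (8 - 4 / γ) / (√(lam ^ 2 + 16 * ν ^ 2) + lam)) (x : E) (y : F) :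
    α * (⟪P x, x⟫ / 2 + 2 * ⟪H x, y⟫) ≤ (1 - (1 - γ) / γ) * (‖x‖ ^ 2 + ‖y‖ ^ 2) := by
  have hlam0 : 0 ≤ lam := (norm_nonneg P).trans hlam
  have hstep : α * (√(lam ^ 2 + 16 * ν ^ 2) + lam) ≤ 8 - 4 / γ :=
    mul_le_of_le_div_of_pos hα0 (by positivity) hα
  have hcoeff : (8 - 4 / γ) / 4 = 1 - (1 - γ) / γ := by
    field_simp
    ring
  calc α * (⟪P x, x⟫ / 2 + 2 * ⟪H x, y⟫)
      ≤ α * ((√(lam ^ 2 + 16 * ν ^ 2) + lam) / 4 * (‖x‖ ^ 2 + ‖y‖ ^ 2)) := by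
        gcongr
        exact half_inner_add_two_mul_inner_le P H hlam hν x y
    _ = α * (√(lam ^ 2 + 16 * ν ^ 2) + lam) / 4 * (‖x‖ ^ 2 + ‖y‖ ^ 2) := by ring
    _ ≤ (1 - (1 - γ) / γ) * (‖x‖ ^ 2 + ‖y‖ ^ 2) := by
        rw [← hcoeff]
        gcongr

end Estimates

section PIPG

variable {E F : Type*} [NormedAddCommGroup E] [InnerProductSpace ℝ E] [CompleteSpace E]
  [NormedAddCommGroup F] [InnerProductSpace ℝ F] [CompleteSpace F]

/-- One iteration `(z, v) ↦ (z', v')` of PIPG with step size `α`, for the objective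
`⟪z, P z⟫ / 2 + ⟪q, z⟫` over `D`. The intermediate dual point `w` is an argument, and the polar
cone of the constraint cone is replaced by an arbitrary set `C`. -/
structure IsPIPGStep (P : E →L[ℝ] E) (q : E) (H : E →L[ℝ] F) (g : F) (D : Set E) (C : Set F)
    (α : ℝ) (z : E) (v w : F) (z' : E) (v' : F) : Prop where
  dual_eq : w = proj C (v + α • (H z - g))
  primal_eq : z' = proj D (z - α • (P z + q + adjoint H w))
  corrected_eq : v' = w + α • H (z' - z)

namespace IsPIPGStep

variable {P : E →L[ℝ] E} {q : E} {H : E →L[ℝ] F} {g : F} {D : Set E} {C : Set F} {α : ℝ}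
  {z₁ z₂ z₁' z₂' : E} {v₁ v₂ w₁ w₂ v₁' v₂' : F}

theorem inner_dual_sub_nonneg (hne : C.Nonempty) (hC : IsClosed C) (hconv : Convex ℝ C)
    (h₁ : IsPIPGStep P q H g D C α z₁ v₁ w₁ z₁' v₁')
    (h₂ : IsPIPGStep P q H g D C α z₂ v₂ w₂ z₂' v₂') :
    0 ≤ ⟪v₂ - v₁ + α • H (z₂ - z₁) - (w₂ - w₁), w₂ - w₁⟫ := by
  have hproj := inner_sub_sub_proj_sub_proj_nonneg hne hC.isComplete hconv
    (v₂ + α • (H z₂ - g)) (v₁ + α • (H z₁ - g))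
  rw [← h₁.dual_eq, ← h₂.dual_eq] at hproj
  convert hproj using 3
  rw [map_sub]
  module

theorem inner_primal_sub_nonneg (hne : D.Nonempty) (hD : IsClosed D) (hconv : Convex ℝ D)
    (h₁ : IsPIPGStep P q H g D C α z₁ v₁ w₁ z₁' v₁')
    (h₂ : IsPIPGStep P q H g D C α z₂ v₂ w₂ z₂' v₂') :
    0 ≤ ⟪z₂ - z₁ - α • (P (z₂ - z₁) + adjoint H (w₂ - w₁)) - (z₂' - z₁'), z₂' - z₁'⟫ := by
  have hproj := inner_sub_sub_proj_sub_proj_nonneg hne hD.isComplete hconv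
    (z₂ - α • (P z₂ + q + adjoint H w₂)) (z₁ - α • (P z₁ + q + adjoint H w₁))
  rw [← h₁.primal_eq, ← h₂.primal_eq] at hproj
  convert hproj using 3
  rw [map_sub, map_sub]
  module

theorem corrected_sub (h₁ : IsPIPGStep P q H g D C α z₁ v₁ w₁ z₁' v₁')
    (h₂ : IsPIPGStep P q H g D C α z₂ v₂ w₂ z₂' v₂') :
    v₂' - v₁' = w₂ - w₁ - α • H (z₂ - z₁ - (z₂' - z₁')) := by
  rw [h₁.corrected_eq, h₂.corrected_eq]
  simp only [map_sub]
  module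

end IsPIPGStep

theorem norm_sq_add_norm_sub_sq_le_of_inner_nonneg {P : E →L[ℝ] E} (hP : P.IsPositive)
    {H : E →L[ℝ] F} {α : ℝ} (hα : 0 ≤ α) {z z' : E} {v w v' : F}
    (hw : 0 ≤ ⟪v + α • H z - w, w⟫) (hz : 0 ≤ ⟪z - α • (P z + adjoint H w) - z', z'⟫)
    (hv : v' = w - α • H (z - z')) :
    ‖z'‖ ^ 2 + ‖z - z'‖ ^ 2 + (‖v'‖ ^ 2 + ‖v - v'‖ ^ 2) ≤
      ‖z‖ ^ 2 + ‖v‖ ^ 2 +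
        α * (⟪P (z - z'), z - z'⟫ / 2 + 2 * ⟪H (z - z'), v - v'⟫) := by
  have hprimal : α * (⟪P z, z'⟫ + ⟪H z', w⟫) ≤ ⟪z - z', z'⟫ := by
    rw [sub_right_comm, inner_sub_left _ _ z', real_inner_smul_left, inner_add_left,
      adjoint_inner_left, real_inner_comm (H z') w] at hz
    linarith
  have hdual : -(α * ⟪H z', w⟫) ≤ ⟪v - v', w⟫ := by
    have hsplit : v + α • H z - w = v - v' + α • H z' := by
      rw [hv, map_sub]
      module
    rw [hsplit, inner_add_left, real_inner_smul_left] at hw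
    linarith
  have hcorr : ⟪v - v', v'⟫ = ⟪v - v', w⟫ - α * ⟪H (z - z'), v - v'⟫ := by
    nth_rewrite 2 [hv]
    rw [inner_sub_right, real_inner_smul_right, real_inner_comm (H (z - z'))]
  have hpos := mul_le_mul_of_nonneg_left
    (neg_inner_map_sub_self_le_four_mul_inner hP.toLinearMap z z') hα
  simp only [ContinuousLinearMap.coe_coe] at hpos
  rw [norm_sq_add_norm_sub_sq, norm_sq_add_norm_sub_sq]
  linarith

theorem stmt0_general {P : E →L[ℝ] E} (hP : P.IsPositive) {q : E} {H : E →L[ℝ] F} {g : F}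
    {D : Set E} (hDne : D.Nonempty) (hDcl : IsClosed D) (hDconv : Convex ℝ D)
    {C : Set F} (hCne : C.Nonempty) (hCcl : IsClosed C) (hCconv : Convex ℝ C)
    {γ lam ν α : ℝ} (hγ : γ ≠ 0) (hlam : ‖P‖ ≤ lam) (hν : ‖H‖ ≤ ν) (hα0 : 0 < α)
    (hα : α ≤ (8 - 4 / γ) / (√(lam ^ 2 + 16 * ν ^ 2) + lam))
    {z₁ z₂ z₁' z₂' : E} {v₁ v₂ w₁ w₂ v₁' v₂' : F}
    (h₁ : IsPIPGStep P q H g D C α z₁ v₁ w₁ z₁' v₁')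
    (h₂ : IsPIPGStep P q H g D C α z₂ v₂ w₂ z₂' v₂') :
    ‖z₂' - z₁'‖ ^ 2 + (1 - γ) / γ * ‖z₁ - z₁' - z₂ + z₂'‖ ^ 2
      + ‖v₂' - v₁'‖ ^ 2 + (1 - γ) / γ * ‖v₁ - v₁' - v₂ + v₂'‖ ^ 2
      ≤ ‖z₂ - z₁‖ ^ 2 + ‖v₂ - v₁‖ ^ 2 := by
  have henergy := norm_sq_add_norm_sub_sq_le_of_inner_nonneg hP hα0.le
    (h₁.inner_dual_sub_nonneg hCne hCcl hCconv h₂)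
    (h₁.inner_primal_sub_nonneg hDne hDcl hDconv h₂) (h₁.corrected_sub h₂)
  have herror := mul_half_inner_add_two_mul_inner_le P H hγ hlam hν hα0 hα
    (z₂ - z₁ - (z₂' - z₁')) (v₂ - v₁ - (v₂' - v₁'))
  rw [show z₁ - z₁' - z₂ + z₂' = -(z₂ - z₁ - (z₂' - z₁')) by abel,
    show v₁ - v₁' - v₂ + v₂' = -(v₂ - v₁ - (v₂' - v₁')) by abel, norm_neg, norm_neg]
  linarith

end PIPG

/-- one step of PIPG is a `γ`-averaged operator. -/
theorem stmt0 {n m : ℕ}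
    (P : EuclideanSpace ℝ (Fin n) →L[ℝ] EuclideanSpace ℝ (Fin n))
    (hPsa : IsSelfAdjoint P) (hPpsd : ∀ x, 0 ≤ ⟪P x, x⟫)
    (q : EuclideanSpace ℝ (Fin n))
    (H : EuclideanSpace ℝ (Fin n) →L[ℝ] EuclideanSpace ℝ (Fin m))
    (g : EuclideanSpace ℝ (Fin m))
    (D : Set (EuclideanSpace ℝ (Fin n)))
    (hDne : D.Nonempty) (hDcl : IsClosed D) (hDconv : Convex ℝ D)
    (K : Set (EuclideanSpace ℝ (Fin m)))
    (hKne : K.Nonempty) (hKcl : IsClosed K) (hKconv : Convex ℝ K)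
    (hKcone : ∀ w ∈ K, ∀ a : ℝ, 0 ≤ a → a • w ∈ K)
    (γ lam ν α : ℝ) (hγ : 1/2 < γ) (hγ1 : γ < 1)
    (hlam : ‖P‖ ≤ lam) (hν : ‖H‖ ≤ ν) (hα0 : 0 < α)
    (hα : α ≤ (8 - 4/γ) / (Real.sqrt (lam^2 + 16*ν^2) + lam))
    (z1 z2 : EuclideanSpace ℝ (Fin n)) (hz1 : z1 ∈ D) (hz2 : z2 ∈ D)
    (v1 v2 : EuclideanSpace ℝ (Fin m))
    (w1p w2p : EuclideanSpace ℝ (Fin m))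
    (z1p z2p : EuclideanSpace ℝ (Fin n))
    (v1p v2p : EuclideanSpace ℝ (Fin m))
    (hw1 : w1p = proj (polarCone K) (v1 + α • (H z1 - g)))
    (hw2 : w2p = proj (polarCone K) (v2 + α • (H z2 - g)))
    (hz1p : z1p = proj D (z1 - α • (P z1 + q + (ContinuousLinearMap.adjoint H) w1p)))
    (hz2p : z2p = proj D (z2 - α • (P z2 + q + (ContinuousLinearMap.adjoint H) w2p)))
    (hv1p : v1p = w1p + α • H (z1p - z1))
    (hv2p : v2p = w2p + α • H (z2p - z2)) :
    ‖z2p - z1p‖^2 + ((1 - γ)/γ) * ‖z1 - z1p - z2 + z2p‖^2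
      + ‖v2p - v1p‖^2 + ((1 - γ)/γ) * ‖v1 - v1p - v2 + v2p‖^2
      ≤ ‖z2 - z1‖^2 + ‖v2 - v1‖^2 := by
  exact stmt0_general (isPositive_def.2 ⟨hPsa.isSymmetric, hPpsd⟩) hDne hDcl hDconv
    (polarCone_nonempty K) (isClosed_polarCone K) (convex_polarCone K) (by linarith) hlam hν hα0 hα
    ⟨hw1, hz1p, hv1p⟩ ⟨hw2, hz2p, hv2p⟩
end

section
/- Let T : ℝᵖ → ℝᵖ be a γ-averaged operator for some γ ∈ (0, 1). Let ξ¹ ∈ ℝᵖ and define ξ^{j+1} = T(ξ^j) for all j ∈ ℕ. Then there exists a vector ξ̄ ∈ ℝᵖ (the minimal-displacement vector of T) such that lim_{j→∞} ξ^j / j = ξ̄ and lim_{j→∞} (ξ^{j+1} − ξ^j) = ξ̄. -/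
open scoped RealInnerProductSpace
open Filter Topology Metric ContinuousLinearMap

/-!
Write `d n = x (n + 1) - x n` for the steps of an orbit of `T`. Averagedness makes `‖d n‖` decrease
to some `r` and forces `d (n + 1) - d n → 0`, so long stretches of the orbit are nearly straight;
since `‖x (n + m) - x n‖` is nonincreasing in `n`, this gives `m * r ≤ ‖x m - x 0‖`. Hence for
`s < r` there are arbitrarily late `n` at which `‖x n‖` grows by at least `s`, that is, at which
`d n` has component about `s` along `x n`. Monotonicity of `1 - T` transfers this to every fixed
step `d i`, up to a bounded error in `⟪x n, d i⟫`. So any two steps have components at least about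
`s` in a common direction, whence `2 * r ≤ ‖d i + d j‖`, and by the parallelogram law the steps
form a Cauchy sequence. The convergence of `x n / n` is Cesàro's theorem.
-/

section TopologicalGroup

variable {E : Type*} [AddCommGroup E] [TopologicalSpace E] [ContinuousAdd E]

theorem tendsto_add_sub_of_tendsto_succ_sub {f : ℕ → E}
    (hf : Tendsto (fun n => f (n + 1) - f n) atTop (𝓝 0)) (m : ℕ) :
    Tendsto (fun n => f (n + m) - f n) atTop (𝓝 0) := by
  have hsum : Tendsto (fun n => ∑ i ∈ Finset.range m, (f (n + i + 1) - f (n + i))) atTop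
      (𝓝 (∑ _ ∈ Finset.range m, 0)) :=
    tendsto_finsetSum _ fun i _ => hf.comp (tendsto_add_atTop_nat i)
  rw [Finset.sum_const_zero] at hsum
  exact hsum.congr fun n => Finset.sum_range_sub (fun i => f (n + i)) m

theorem tendsto_add_sub_sub_nsmul {x : ℕ → E}
    (hd : Tendsto (fun n => (x (n + 2) - x (n + 1)) - (x (n + 1) - x n)) atTop (𝓝 0)) (m : ℕ) :
    Tendsto (fun n => (x (n + m) - x n) - m • (x (n + 1) - x n)) atTop (𝓝 0) := by
  have hsum : Tendsto (fun n => ∑ i ∈ Finset.range m,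
      ((x (n + i + 1) - x (n + i)) - (x (n + 1) - x n))) atTop (𝓝 (∑ _ ∈ Finset.range m, 0)) :=
    tendsto_finsetSum _ fun i _ =>
      tendsto_add_sub_of_tendsto_succ_sub (f := fun n => x (n + 1) - x n) hd i
  rw [Finset.sum_const_zero] at hsum
  refine hsum.congr fun n => ?_
  rw [Finset.sum_sub_distrib, Finset.sum_const, Finset.card_range]
  congr 1
  exact Finset.sum_range_sub (fun i => x (n + i)) m

end TopologicalGroup

theorem tendsto_zero_of_norm_sq_le {ι E : Type*} [SeminormedAddGroup E] {l : Filter ι}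
    {f : ι → E} {g : ι → ℝ} (hfg : ∀ i, ‖f i‖ ^ 2 ≤ g i) (hg : Tendsto g l (𝓝 0)) :
    Tendsto f l (𝓝 0) :=
  squeeze_zero_norm (fun i => Real.le_sqrt_of_sq_le (hfg i)) (by simpa using hg.sqrt)

theorem tendsto_inv_smul_of_tendsto_succ_sub {E : Type*} [NormedAddCommGroup E] [NormedSpace ℝ E]
    {x : ℕ → E} {v : E} (hx : Tendsto (fun n => x (n + 1) - x n) atTop (𝓝 v)) :
    Tendsto (fun n : ℕ => (n : ℝ)⁻¹ • x n) atTop (𝓝 v) := by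
  have hinit : Tendsto (fun n : ℕ => (n : ℝ)⁻¹ • x 0) atTop (𝓝 0) := by
    simpa using (tendsto_inv_atTop_nhds_zero_nat (𝕜 := ℝ)).smul_const (x 0)
  have hsum := hx.cesaro_smul.add hinit
  rw [add_zero] at hsum
  refine hsum.congr fun n => ?_
  rw [Finset.sum_range_sub, ← smul_add, sub_add_cancel]

theorem frequently_le_succ_of_tendsto_atTop {α : Type*} [LinearOrder α] [NoMaxOrder α] {a : ℕ → α}
    (ha : Tendsto a atTop atTop) : ∃ᶠ n in atTop, a n ≤ a (n + 1) := by
  intro h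
  obtain ⟨N, hN⟩ := eventually_atTop.1 h
  have hle : ∀ n ≥ N, a n ≤ a N := fun n hn => by
    induction n, hn using Nat.le_induction with
    | base => rfl
    | succ n hn ih => exact (not_le.1 (hN n hn)).le.trans ih
  obtain ⟨n, hn, hlt⟩ := ((eventually_ge_atTop N).and (ha.eventually_gt_atTop (a N))).exists
  exact (hle n hn).not_gt hlt

section InnerProduct

variable {E : Type*} [NormedAddCommGroup E] [InnerProductSpace ℝ E]

theorem cauchySeq_of_two_mul_le_norm_add {ι : Type*} [Nonempty ι] [SemilatticeSup ι] {d : ι → E}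
    {r : ℝ} (hr : Tendsto (fun i => ‖d i‖) atTop (𝓝 r)) (hd : ∀ i j, 2 * r ≤ ‖d i + d j‖) :
    CauchySeq d := by
  have hr0 : 0 ≤ r := ge_of_tendsto' hr fun i => norm_nonneg (d i)
  have hbound : ∀ p : ι × ι,
      ‖d p.1 - d p.2‖ ^ 2 ≤ 2 * (‖d p.1‖ ^ 2 - r ^ 2) + 2 * (‖d p.2‖ ^ 2 - r ^ 2) := fun p => by
    have hsq : (2 * r) ^ 2 ≤ ‖d p.1 + d p.2‖ ^ 2 := pow_le_pow_left₀ (by positivity) (hd _ _) 2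
    linarith [parallelogram_law_with_norm ℝ (d p.1) (d p.2)]
  have hzero : Tendsto (fun i => 2 * (‖d i‖ ^ 2 - r ^ 2)) atTop (𝓝 0) := by
    have h := ((hr.pow 2).sub_const (r ^ 2)).const_mul 2
    rwa [sub_self, mul_zero] at h
  have hlim : Tendsto (fun p : ι × ι => 2 * (‖d p.1‖ ^ 2 - r ^ 2) + 2 * (‖d p.2‖ ^ 2 - r ^ 2))
      atTop (𝓝 0) := by
    rw [← prod_atTop_atTop_eq, ← add_zero (0 : ℝ)]
    exact (hzero.comp tendsto_fst).add (hzero.comp tendsto_snd)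
  rw [cauchySeq_iff_tendsto_dist_atTop_0]
  simpa only [dist_eq_norm, norm_zero] using (tendsto_zero_of_norm_sq_le hbound hlim).norm

theorem mul_norm_sub_le_inner_of_add_le_norm_add {x d : E} {s : ℝ} (hs : 0 ≤ s)
    (h : ‖x‖ + s ≤ ‖x + d‖) : s * ‖x‖ - ‖d‖ ^ 2 / 2 ≤ ⟪x, d⟫ := by
  have hsq : (‖x‖ + s) ^ 2 ≤ ‖x + d‖ ^ 2 := pow_le_pow_left₀ (by positivity) h 2
  rw [norm_add_sq_real] at hsq
  linarith [sq_nonneg s, add_sq ‖x‖ s]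

theorem inner_sub_sub_nonpos_of_norm_add_sub_add_le {x y a b : E}
    (h : ‖(x + a) - (y + b)‖ ≤ ‖x - y‖) : ⟪x - y, a - b⟫ ≤ 0 := by
  have hsq : ‖(x + a) - (y + b)‖ ^ 2 ≤ ‖x - y‖ ^ 2 := pow_le_pow_left₀ (norm_nonneg _) h 2
  rw [add_sub_add_comm, norm_add_sq_real] at hsq
  linarith [sq_nonneg ‖a - b‖]

end InnerProduct

/-- A sequence on which the shift `x n ↦ x (n + 1)` is nonexpansive. These are the orbits of
nonexpansive maps; phrasing the condition on the sequence frees the asymptotic analysis from the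
map and its domain. -/
def NonexpansiveOrbit {E : Type*} [NormedAddCommGroup E] (x : ℕ → E) : Prop :=
  ∀ i j, ‖x (i + 1) - x (j + 1)‖ ≤ ‖x i - x j‖

namespace NonexpansiveOrbit

section NormedGroup

variable {E : Type*} [NormedAddCommGroup E] {x : ℕ → E}

theorem antitone_norm_add_sub (hx : NonexpansiveOrbit x) (m : ℕ) :
    Antitone fun n => ‖x (n + m) - x n‖ :=
  antitone_nat_of_succ_le fun n => by simpa only [Nat.add_right_comm] using hx (n + m) n

theorem exists_tendsto_norm_step (hx : NonexpansiveOrbit x) :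
    ∃ r, Tendsto (fun n => ‖x (n + 1) - x n‖) atTop (𝓝 r) :=
  ⟨_, tendsto_atTop_ciInf (hx.antitone_norm_add_sub 1)
    ⟨0, Set.forall_mem_range.2 fun _ => norm_nonneg _⟩⟩

theorem nat_mul_le_norm_sub [NormedSpace ℝ E] (hx : NonexpansiveOrbit x)
    (hd : Tendsto (fun n => (x (n + 2) - x (n + 1)) - (x (n + 1) - x n)) atTop (𝓝 0)) {r : ℝ}
    (hr : ∀ n, r ≤ ‖x (n + 1) - x n‖) (m : ℕ) : m * r ≤ ‖x m - x 0‖ := by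
  have hlim : Tendsto (fun n => ‖x m - x 0‖ + ‖(x (n + m) - x n) - m • (x (n + 1) - x n)‖) atTop
      (𝓝 ‖x m - x 0‖) := by
    simpa using (tendsto_add_sub_sub_nsmul hd m).norm.const_add ‖x m - x 0‖
  refine ge_of_tendsto' hlim fun n => ?_
  calc m * r ≤ m * ‖x (n + 1) - x n‖ := by gcongr; exact hr n
    _ = ‖m • (x (n + 1) - x n)‖ := by rw [← Nat.cast_smul_eq_nsmul ℝ, norm_smul, Real.norm_natCast]
    _ ≤ ‖x (n + m) - x n‖ + ‖(x (n + m) - x n) - m • (x (n + 1) - x n)‖ := norm_le_insert _ _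
    _ ≤ ‖x m - x 0‖ + ‖(x (n + m) - x n) - m • (x (n + 1) - x n)‖ := by
      gcongr
      simpa only [Nat.zero_add] using hx.antitone_norm_add_sub m (Nat.zero_le n)

end NormedGroup

variable {E : Type*} [NormedAddCommGroup E] [InnerProductSpace ℝ E] {x : ℕ → E}

theorem inner_step_sub_le_inner_step (hx : NonexpansiveOrbit x) (n i : ℕ) :
    ⟪x n, x (n + 1) - x n⟫ - 2 * ‖x i‖ * ‖x 1 - x 0‖ ≤ ⟪x n, x (i + 1) - x i⟫ := by
  have hmono : ⟪x n - x i, (x (n + 1) - x n) - (x (i + 1) - x i)⟫ ≤ 0 :=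
    inner_sub_sub_nonpos_of_norm_add_sub_add_le (by simpa using hx n i)
  have hstep : ∀ k, ‖x (k + 1) - x k‖ ≤ ‖x 1 - x 0‖ := fun k =>
    hx.antitone_norm_add_sub 1 (Nat.zero_le k)
  have herr : ⟪x i, (x (n + 1) - x n) - (x (i + 1) - x i)⟫ ≤ 2 * ‖x i‖ * ‖x 1 - x 0‖ :=
    calc ⟪x i, (x (n + 1) - x n) - (x (i + 1) - x i)⟫
      _ ≤ ‖x i‖ * ‖(x (n + 1) - x n) - (x (i + 1) - x i)‖ := real_inner_le_norm _ _
      _ ≤ ‖x i‖ * (‖x 1 - x 0‖ + ‖x 1 - x 0‖) := by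
        gcongr
        exact norm_sub_le_of_le (hstep n) (hstep i)
      _ = 2 * ‖x i‖ * ‖x 1 - x 0‖ := by ring
  rw [inner_sub_left, inner_sub_right (x n)] at hmono
  linarith

theorem frequently_mul_norm_sub_le_inner_step (hx : NonexpansiveOrbit x) {s : ℝ} (hs : 0 ≤ s)
    (hgrowth : Tendsto (fun n : ℕ => ‖x n‖ - n * s) atTop atTop) :
    ∃ᶠ n in atTop, s * ‖x n‖ - ‖x 1 - x 0‖ ^ 2 / 2 ≤ ⟪x n, x (n + 1) - x n⟫ := by
  refine (frequently_le_succ_of_tendsto_atTop hgrowth).mono fun n hn => ?_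
  have hgain : ‖x n‖ + s ≤ ‖x n + (x (n + 1) - x n)‖ := by
    rw [add_sub_cancel]
    push_cast at hn
    linarith
  refine le_trans ?_ (mul_norm_sub_le_inner_of_add_le_norm_add hs hgain)
  gcongr
  exact hx.antitone_norm_add_sub 1 (Nat.zero_le n)

theorem two_mul_le_norm_step_add_step_of_tendsto (hx : NonexpansiveOrbit x) {s : ℝ} (hs : 0 ≤ s)
    (hgrowth : Tendsto (fun n : ℕ => ‖x n‖ - n * s) atTop atTop) (i j : ℕ) :
    2 * s ≤ ‖(x (i + 1) - x i) + (x (j + 1) - x j)‖ := by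
  set c := ‖(x (i + 1) - x i) + (x (j + 1) - x j)‖
  set C := ‖x 1 - x 0‖ ^ 2 + 2 * (‖x i‖ + ‖x j‖) * ‖x 1 - x 0‖
  have hfreq : ∃ᶠ n in atTop, (2 * s - c) * ‖x n‖ ≤ C := by
    refine (hx.frequently_mul_norm_sub_le_inner_step hs hgrowth).mono fun n hn => ?_
    have hcs := real_inner_le_norm (x n) ((x (i + 1) - x i) + (x (j + 1) - x j))
    rw [inner_add_right] at hcs
    linarith [hx.inner_step_sub_le_inner_step n i, hx.inner_step_sub_le_inner_step n j]
  have hnorm : Tendsto (fun n => ‖x n‖) atTop atTop :=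
    tendsto_atTop_mono (fun n : ℕ => sub_le_self _ (by positivity)) hgrowth
  by_contra! hlt
  have hlarge := (hnorm.const_mul_atTop (sub_pos.2 hlt)).eventually_gt_atTop C
  exact hfreq (hlarge.mono fun n hn => hn.not_ge)

theorem two_mul_le_norm_step_add_step (hx : NonexpansiveOrbit x) {r : ℝ}
    (hr : ∀ n : ℕ, n * r ≤ ‖x n - x 0‖) (i j : ℕ) :
    2 * r ≤ ‖(x (i + 1) - x i) + (x (j + 1) - x j)‖ := by
  rw [← le_div_iff₀' two_pos]
  refine le_of_forall_lt_imp_le_of_dense fun s hsr => ?_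
  rw [le_div_iff₀' two_pos]
  rcases lt_or_ge s 0 with hs | hs
  · exact (mul_neg_of_pos_of_neg two_pos hs).le.trans (norm_nonneg _)
  refine hx.two_mul_le_norm_step_add_step_of_tendsto hs ?_ i j
  have hlinear : Tendsto (fun n : ℕ => n * (r - s) - ‖x 0‖) atTop atTop :=
    tendsto_atTop_add_const_right _ _
      (tendsto_natCast_atTop_atTop.atTop_mul_const (sub_pos.2 hsr))
  refine tendsto_atTop_mono (fun n => ?_) hlinear
  linarith [hr n, norm_sub_le (x n) (x 0)]

theorem exists_tendsto_step [CompleteSpace E] (hx : NonexpansiveOrbit x)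
    (hd : Tendsto (fun n => (x (n + 2) - x (n + 1)) - (x (n + 1) - x n)) atTop (𝓝 0)) :
    ∃ v, Tendsto (fun n => x (n + 1) - x n) atTop (𝓝 v) := by
  obtain ⟨r, hr⟩ := hx.exists_tendsto_norm_step
  have hgrowth := hx.nat_mul_le_norm_sub hd ((hx.antitone_norm_add_sub 1).le_of_tendsto hr)
  exact cauchySeq_tendsto_of_complete
    (cauchySeq_of_two_mul_le_norm_add hr (hx.two_mul_le_norm_step_add_step hgrowth))

end NonexpansiveOrbit

/-- The map `T` is `γ`-averaged on the set `D`: the defining inequality of a `γ`-averaged operator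
holds for all pairs of points of `D`. For `γ = 0`, where the quotient is `0`, this says that `T` is
nonexpansive on `D`. -/
def AveragedOn {E : Type*} [NormedAddCommGroup E] (γ : ℝ) (T : E → E) (D : Set E) : Prop :=
  ∀ ξ₁ ∈ D, ∀ ξ₂ ∈ D, ‖T ξ₁ - T ξ₂‖ ^ 2 - ‖ξ₁ - ξ₂‖ ^ 2
    ≤ ((γ - 1) / γ) * ‖ξ₁ - T ξ₁ - ξ₂ + T ξ₂‖ ^ 2

namespace AveragedOn

variable {E : Type*} [NormedAddCommGroup E] {γ : ℝ} {T : E → E} {D : Set E} {x : ℕ → E}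

theorem nonexpansiveOrbit (hT : AveragedOn γ T D) (hγ0 : 0 ≤ γ) (hγ1 : γ ≤ 1)
    (hxD : ∀ n, x n ∈ D) (hx : ∀ n, x (n + 1) = T (x n)) : NonexpansiveOrbit x := fun i j => by
  have hcoeff : (γ - 1) / γ ≤ 0 := div_nonpos_of_nonpos_of_nonneg (sub_nonpos.2 hγ1) hγ0
  rw [hx, hx]
  refine le_of_sq_le_sq (sub_nonpos.1 ?_) (norm_nonneg _)
  exact (hT _ (hxD i) _ (hxD j)).trans (mul_nonpos_of_nonpos_of_nonneg hcoeff (sq_nonneg _))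

theorem norm_sq_step_sub_step_le (hT : AveragedOn γ T D) (hγ0 : 0 < γ) (hγ1 : γ < 1)
    (hxD : ∀ n, x n ∈ D) (hx : ∀ n, x (n + 1) = T (x n)) (n : ℕ) :
    ‖(x (n + 2) - x (n + 1)) - (x (n + 1) - x n)‖ ^ 2
      ≤ γ / (1 - γ) * (‖x (n + 1) - x n‖ ^ 2 - ‖x (n + 2) - x (n + 1)‖ ^ 2) := by
  have h := hT _ (hxD n) _ (hxD (n + 1))
  rw [← hx, ← hx, norm_sub_rev (x (n + 1)), norm_sub_rev (x n),
    show x n - x (n + 1) - x (n + 1) + x (n + 2) = (x (n + 2) - x (n + 1)) - (x (n + 1) - x n) by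
      abel, div_mul_eq_mul_div, le_div_iff₀ hγ0] at h
  rw [div_mul_eq_mul_div, le_div_iff₀ (sub_pos.2 hγ1)]
  linarith

theorem tendsto_step_sub_step (hT : AveragedOn γ T D) (hγ0 : 0 < γ) (hγ1 : γ < 1)
    (hxD : ∀ n, x n ∈ D) (hx : ∀ n, x (n + 1) = T (x n)) :
    Tendsto (fun n => (x (n + 2) - x (n + 1)) - (x (n + 1) - x n)) atTop (𝓝 0) := by
  obtain ⟨r, hr⟩ := (hT.nonexpansiveOrbit hγ0.le hγ1.le hxD hx).exists_tendsto_norm_step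
  have hr' : Tendsto (fun n => ‖x (n + 2) - x (n + 1)‖) atTop (𝓝 r) :=
    hr.comp (tendsto_add_atTop_nat 1)
  refine tendsto_zero_of_norm_sq_le (hT.norm_sq_step_sub_step_le hγ0 hγ1 hxD hx) ?_
  simpa using ((hr.pow 2).sub (hr'.pow 2)).const_mul (γ / (1 - γ))

end AveragedOn

theorem stmt1_general {E : Type*} [NormedAddCommGroup E] [InnerProductSpace ℝ E] [CompleteSpace E]
    {γ : ℝ} (hγ0 : 0 < γ) (hγ1 : γ < 1) {T : E → E} {D : Set E} (hT : AveragedOn γ T D)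
    {ξ : ℕ → E} (hξD : ∀ j, ξ j ∈ D) (hξ : ∀ j, ξ (j + 1) = T (ξ j)) :
    ∃ ξbar : E, Tendsto (fun j : ℕ => (j : ℝ)⁻¹ • ξ j) atTop (𝓝 ξbar) ∧
      Tendsto (fun j : ℕ => ξ (j + 1) - ξ j) atTop (𝓝 ξbar) := by
  obtain ⟨ξbar, hstep⟩ := (hT.nonexpansiveOrbit hγ0.le hγ1.le hξD hξ).exists_tendsto_step
    (hT.tendsto_step_sub_step hγ0 hγ1 hξD hξ)
  exact ⟨ξbar, tendsto_inv_smul_of_tendsto_succ_sub hstep, hstep⟩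

/-- fixed-point iterations of a `γ`-averaged operator have a
minimal-displacement vector `ξ̄` with `ξ^j/j → ξ̄` and `ξ^{j+1} - ξ^j → ξ̄`. -/
theorem stmt1 {p : ℕ} (γ : ℝ) (hγ0 : 0 < γ) (hγ1 : γ < 1)
    (T : EuclideanSpace ℝ (Fin p) → EuclideanSpace ℝ (Fin p))
    (hT : ∀ ξ₁ ξ₂, ‖T ξ₁ - T ξ₂‖^2 - ‖ξ₁ - ξ₂‖^2
      ≤ ((γ - 1)/γ) * ‖ξ₁ - T ξ₁ - ξ₂ + T ξ₂‖^2)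
    (ξ : ℕ → EuclideanSpace ℝ (Fin p))
    (hξ : ∀ j : ℕ, ξ (j + 1) = T (ξ j)) :
    ∃ ξbar : EuclideanSpace ℝ (Fin p),
      Tendsto (fun j : ℕ => (j : ℝ)⁻¹ • ξ j) atTop (𝓝 ξbar) ∧
      Tendsto (fun j : ℕ => ξ (j + 1) - ξ j) atTop (𝓝 ξbar) := by
  exact stmt1_general hγ0 hγ1 (D := Set.univ) (fun ξ₁ _ ξ₂ _ => hT ξ₁ ξ₂)
    (fun j => Set.mem_univ (ξ j)) hξ
end
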